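/- For every i and every φ ∈ (0,1)^n, the partial derivative of S(φ) with respect to φ_i is given by ∂S/∂φ_i = φ_i^{-2} · S e_i (e_iᵀ − m_iᵀ) S, where e_i is the i-th standard basis vector and m_iᵀ is the i-th row of M. -/

import Mathlib

/-!
Write `A(φ) = I − (I − Φ)M`, so that `A(φ) S(φ) = Φ`. Since `M` is row-stochastic and `0 < φ < 1`,
`A(φ)` is strictly diagonally dominant, hence invertible. Changing only the `i`-th coordinate of `φ`
to `t` changes `A` and `Φ` only in row `i`, and this gives the exact difference formula
`S(t) − S = (t − φ_i) · A(t)⁻¹ e_i (e_iᵀ − m_iᵀ S)`. The difference quotient therefore converges to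
`A⁻¹ e_i (e_iᵀ − m_iᵀ S)` by continuity of the matrix inverse. Finally `S e_i = φ_i A⁻¹ e_i`, and
row `i` of `A S = Φ` reads `(e_iᵀ − m_iᵀ) S = φ_i (e_iᵀ − m_iᵀ S)`, which together yield the
stated form of the derivative.
-/

open Matrix BigOperators

/-- The matrix `S(φ) = (I − (I − Φ)M)⁻¹ Φ`, with `Φ = diag(φ)`. -/
noncomputable def Sfun {n : ℕ} (M : Matrix (Fin n) (Fin n) ℝ)
    (phi : Fin n → ℝ) : Matrix (Fin n) (Fin n) ℝ :=
  (1 - (1 - Matrix.diagonal phi) * M)⁻¹ * Matrix.diagonal phi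

/-- The matrix `A(φ) = I − (I − Φ)M` whose inverse appears in `Sfun`. -/
noncomputable def Amat {n : ℕ} (M : Matrix (Fin n) (Fin n) ℝ) (phi : Fin n → ℝ) :
    Matrix (Fin n) (Fin n) ℝ :=
  1 - (1 - Matrix.diagonal phi) * M

lemma Amat_apply {n : ℕ} (M : Matrix (Fin n) (Fin n) ℝ) (phi : Fin n → ℝ) (k l : Fin n) :
    Amat M phi k l = (1 : Matrix (Fin n) (Fin n) ℝ) k l - (1 - phi k) * M k l := by
  have h : (1 - Matrix.diagonal phi : Matrix (Fin n) (Fin n) ℝ)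
      = Matrix.diagonal (fun k => 1 - phi k) := by
    rw [← Matrix.diagonal_one, Matrix.diagonal_sub]
  rw [Amat, h, Matrix.sub_apply, Matrix.diagonal_mul]

/-- `A(φ)` is strictly diagonally dominant, hence nonsingular. -/
lemma Amat_det_ne_zero {n : ℕ} {M : Matrix (Fin n) (Fin n) ℝ}
    (hMnn : ∀ i j, 0 ≤ M i j) (hMrow : ∀ i, ∑ j, M i j = 1)
    {phi : Fin n → ℝ} (hphi : ∀ i, phi i ∈ Set.Ioo (0 : ℝ) 1) :
    (Amat M phi).det ≠ 0 := by
  apply det_ne_zero_of_sum_row_lt_diag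
  intro k
  obtain ⟨h0, h1⟩ := hphi k
  have hoff : ∑ j ∈ Finset.univ.erase k, ‖Amat M phi k j‖
      = (1 - phi k) * ∑ j ∈ Finset.univ.erase k, M k j := by
    rw [Finset.mul_sum]
    refine Finset.sum_congr rfl fun j hj => ?_
    have hne : k ≠ j := (Finset.ne_of_mem_erase hj).symm
    rw [Amat_apply, Matrix.one_apply_ne hne, zero_sub, norm_neg, Real.norm_of_nonneg]
    exact mul_nonneg (by linarith) (hMnn k j)
  have hsum : M k k + ∑ j ∈ Finset.univ.erase k, M k j = 1 := by
    rw [Finset.add_sum_erase _ _ (Finset.mem_univ k), hMrow]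
  rw [hoff, Amat_apply, Matrix.one_apply_eq]
  refine lt_of_lt_of_le ?_ (le_abs_self _)
  have : ∑ j ∈ Finset.univ.erase k, M k j = 1 - M k k := by linarith
  rw [this]
  nlinarith

lemma Amat_mul_Sfun {n : ℕ} {M : Matrix (Fin n) (Fin n) ℝ} {phi : Fin n → ℝ}
    (h : (Amat M phi).det ≠ 0) : Amat M phi * Sfun M phi = Matrix.diagonal phi := by
  rw [Sfun, ← Amat, Matrix.mul_nonsing_inv_cancel_left _ _ (isUnit_iff_ne_zero.mpr h)]

lemma update_mem_Ioo {n : ℕ} {phi : Fin n → ℝ} (hphi : ∀ i, phi i ∈ Set.Ioo (0 : ℝ) 1)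
    (i : Fin n) {t : ℝ} (ht : t ∈ Set.Ioo (0 : ℝ) 1) (k : Fin n) :
    Function.update phi i t k ∈ Set.Ioo (0 : ℝ) 1 := by
  rcases eq_or_ne k i with rfl | hk
  · simpa using ht
  · simpa [hk] using hphi k

/-- The exact difference formula: `S(t) − S = (t − φ_i) A(t)⁻¹ e_i (e_iᵀ − m_iᵀ S)`. -/
lemma Sfun_update_sub {n : ℕ} {M : Matrix (Fin n) (Fin n) ℝ} {phi : Fin n → ℝ} {i : Fin n} {t : ℝ}
    (h : (Amat M phi).det ≠ 0) (ht : (Amat M (Function.update phi i t)).det ≠ 0) (a b : Fin n) :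
    Sfun M (Function.update phi i t) a b - Sfun M phi a b
      = (t - phi i) * ((Amat M (Function.update phi i t))⁻¹ a i
          * ((Pi.single i 1 - M i ᵥ* Sfun M phi : Fin n → ℝ) b)) := by
  set psi := Function.update phi i t with hpsi
  have hd : Matrix.diagonal psi - Matrix.diagonal phi
      = Matrix.single i i (t - phi i) := by
    ext k l
    rcases eq_or_ne k l with rfl | hkl
    · rcases eq_or_ne k i with rfl | hk
      · simp [hpsi]
      · simp [hpsi, hk, hk.symm]
    · have : ¬ (i = k ∧ i = l) := fun h => hkl (h.1.symm.trans h.2)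
      simp [hkl, this]
  have hA : Amat M psi = Amat M phi + Matrix.single i i (t - phi i) * M := by
    rw [← hd, Amat, Amat]; noncomm_ring
  have key : Amat M psi * (Sfun M psi - Sfun M phi)
      = Matrix.single i i (t - phi i) * (1 - M * Sfun M phi) := by
    rw [Matrix.mul_sub, Amat_mul_Sfun ht, hA, Matrix.add_mul, Amat_mul_Sfun h, Matrix.mul_sub,
      ← hd]
    noncomm_ring
  have key2 : Sfun M psi - Sfun M phi
      = (Amat M psi)⁻¹ * (Matrix.single i i (t - phi i) * (1 - M * Sfun M phi)) := by
    rw [← key, Matrix.nonsing_inv_mul_cancel_left _ _ (isUnit_iff_ne_zero.mpr ht)]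
  have hR : (1 - M * Sfun M phi) i b = (Pi.single i 1 - M i ᵥ* Sfun M phi : Fin n → ℝ) b := by
    simp [Matrix.mul_apply, Matrix.vecMul, dotProduct, Matrix.one_apply, Pi.single_apply, eq_comm]
  rw [← Matrix.sub_apply, key2, Matrix.mul_apply, Finset.sum_eq_single i]
  · rw [Matrix.single_mul_apply_same, hR]; ring
  · intro k _ hk
    rw [Matrix.single_mul_apply_of_ne _ _ _ _ _ hk, mul_zero]
  · simp

/-- For every `i` and every `φ ∈ (0,1)^n`,
`∂S/∂φ_i = φ_i⁻² · (S e_i)(e_iᵀ − m_iᵀ)S`, where `e_i` is the `i`-th standard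
basis vector and `m_iᵀ` is the `i`-th row of `M`. -/
theorem stmt_15 {n : ℕ} (hn : 2 ≤ n) (W M : Matrix (Fin n) (Fin n) ℝ)
    (hWnn : ∀ i j, 0 ≤ W i j) (hWrow : ∀ i, ∑ j, W i j = 1)
    (hWirr : ∀ i j, i ≠ j → Relation.TransGen (fun a b => 0 < W b a) i j)
    (hWprim : ∃ k : ℕ, 0 < k ∧ ∀ i j, 0 < (W ^ k) i j)
    (hMnn : ∀ i j, 0 ≤ M i j) (hMrow : ∀ i, ∑ j, M i j = 1)
    (hMW : ∀ i j, 0 < M i j ↔ 0 < W i j)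
    (phi : Fin n → ℝ)
    (hphi : ∀ i, phi i ∈ Set.Ioo (0 : ℝ) 1) :
    ∀ i : Fin n, ∀ a b : Fin n,
      HasDerivAt (fun t => Sfun M (Function.update phi i t) a b)
        ((((phi i) ^ 2)⁻¹ •
          Matrix.vecMulVec (Sfun M phi *ᵥ Pi.single i 1)
            ((Pi.single i 1 - M i) ᵥ* Sfun M phi)) a b)
        (phi i) := by
  intro i a b
  have hdet := Amat_det_ne_zero hMnn hMrow hphi
  have hpos : phi i ≠ 0 := (hphi i).1.ne'
  have hcol : (Sfun M phi *ᵥ Pi.single i 1) a = phi i * (Amat M phi)⁻¹ a i := by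
    rw [Matrix.mulVec_single_one, Matrix.col_apply, Sfun, ← Amat, Matrix.mul_diagonal, mul_comm]
  have hrow : ((Pi.single i 1 - M i) ᵥ* Sfun M phi) b
      = phi i * (Pi.single i 1 - M i ᵥ* Sfun M phi : Fin n → ℝ) b := by
    have h := congrFun (congrFun (Amat_mul_Sfun hdet) i) b
    have hL : (Amat M phi * Sfun M phi) i b
        = Sfun M phi i b - (1 - phi i) * (M i ᵥ* Sfun M phi) b := by
      simp only [Matrix.mul_apply, Amat_apply, sub_mul, Finset.sum_sub_distrib, Matrix.vecMul,
        dotProduct, Finset.mul_sum]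
      simp [Matrix.one_apply, mul_assoc]
    have hD : Matrix.diagonal phi i b = phi i * (Pi.single i 1 : Fin n → ℝ) b := by
      rcases eq_or_ne i b with rfl | hib
      · simp
      · simp [hib, hib.symm]
    rw [hL, hD] at h
    rw [Matrix.sub_vecMul, Pi.sub_apply, Matrix.single_one_vecMul, Pi.sub_apply, Matrix.row_apply]
    linarith
  -- The limit `A⁻¹ e_i (e_iᵀ − m_iᵀ S)` of the difference quotients is the stated derivative.
  have hval : ((((phi i) ^ 2)⁻¹ • Matrix.vecMulVec (Sfun M phi *ᵥ Pi.single i 1)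
        ((Pi.single i 1 - M i) ᵥ* Sfun M phi)) a b)
      = (Amat M phi)⁻¹ a i * ((Pi.single i 1 - M i ᵥ* Sfun M phi : Fin n → ℝ) b) := by
    rw [Matrix.smul_apply, Matrix.vecMulVec_apply, hcol, hrow, smul_eq_mul]
    field_simp
  rw [hval, hasDerivAt_iff_tendsto_slope]
  have hcont : ContinuousAt (fun t => (Amat M (Function.update phi i t))⁻¹ a i) (phi i) := by
    have hA : Continuous fun t => Amat M (Function.update phi i t) := by
      unfold Amat
      fun_prop
    have hinv : ContinuousAt (fun t => (Amat M (Function.update phi i t)).det⁻¹) (phi i) :=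
      hA.matrix_det.continuousAt.inv₀ (by simpa using hdet)
    have hadj : ContinuousAt (fun t => (Amat M (Function.update phi i t)).adjugate a i) (phi i) :=
      (hA.matrix_adjugate.matrix_elem a i).continuousAt
    simp only [Matrix.inv_def, Matrix.smul_apply, Ring.inverse_eq_inv', smul_eq_mul]
    exact hinv.mul hadj
  have hlim := (hcont.tendsto.mul_const
    ((Pi.single i 1 - M i ᵥ* Sfun M phi : Fin n → ℝ) b)).mono_left
      (nhdsWithin_le_nhds (s := {phi i}ᶜ))
  rw [Function.update_eq_self] at hlim
  refine hlim.congr' ?_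
  filter_upwards [self_mem_nhdsWithin, mem_nhdsWithin_of_mem_nhds (isOpen_Ioo.mem_nhds (hphi i))]
    with t hne ht
  have hne' : t - phi i ≠ 0 := sub_ne_zero.mpr hne
  have hdt := Amat_det_ne_zero hMnn hMrow (update_mem_Ioo hphi i ht)
  rw [slope_def_field, Function.update_eq_self, Sfun_update_sub hdet hdt,
    mul_div_cancel_left₀ _ hne']
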